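/- Suppose f is irreducible in ℤ[u^{±1}] and noncyclotomic. Then there exists r > 0 such that ξ*(Z̄_f) + ρ(B̄_r(W_f^∘)) = X_f, where B̄_r(W_f^∘) = {w ∈ W_f^∘ : ‖w‖_∞ ≤ r}; in particular ξ*(Z̄_f) + X_f^∘ = X_f. -/

import Mathlib

open Filter Topology Polynomial

noncomputable section

/-- `f(σ̄)` on real sequences. -/
def fsR (f : Polynomial ℤ) (w : ℤ → ℝ) : ℤ → ℝ :=
  fun n => ∑ k ∈ Finset.range (f.natDegree + 1), (f.coeff k : ℝ) * w (n + (k : ℤ))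

/-- Bounded real sequences. -/
def Bdd (w : ℤ → ℝ) : Prop := ∃ B : ℝ, ∀ n, |w n| ≤ B

/-- `f` is noncyclotomic. -/
def Noncyclotomic (f : Polynomial ℤ) : Prop :=
  ∀ θ : ℂ, Polynomial.aeval θ f = 0 → ∀ n : ℕ, 0 < n → θ ^ n ≠ 1

/-- The shift `σ̄` on real sequences. -/
def shiftR (w : ℤ → ℝ) : ℤ → ℝ := fun n => w (n + 1)

/-- `σ̄^k` on real sequences. -/
def shiftIterR (k : ℤ) (w : ℤ → ℝ) : ℤ → ℝ := fun n => w (n + k)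

/-- Membership in `W_f = f(σ̄)^{-1}(ℓ^∞(ℤ,ℤ))`. -/
def InWf (f : Polynomial ℤ) (w : ℤ → ℝ) : Prop :=
  Bdd w ∧ ∀ n, ∃ z : ℤ, fsR f w n = (z : ℝ)

/-- `Y_f = W_f ∩ [0,1)^ℤ`. -/
def YfSet (f : Polynomial ℤ) : Set (ℤ → ℝ) :=
  {w | InWf f w ∧ ∀ n, w n ∈ Set.Ico (0:ℝ) 1}

/-- `Z̄_f = f(σ̄)(Ȳ_f)`, where `Ȳ_f` is the closure of `Y_f` in the topology of
coordinatewise convergence. -/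
def ZbarR (f : Polynomial ℤ) : Set (ℤ → ℝ) := fsR f '' closure (YfSet f)

/-- The circle `ℝ/ℤ`. -/
abbrev Torus := AddCircle (1 : ℝ)

/-- `f(σ)` acting on `𝕋^ℤ`. -/
def fsT (f : Polynomial ℤ) (x : ℤ → Torus) : ℤ → Torus :=
  fun n => ∑ k ∈ Finset.range (f.natDegree + 1), f.coeff k • x (n + (k : ℤ))

/-- `X_f = ker f(σ) ⊆ 𝕋^ℤ`. -/
def Xf (f : Polynomial ℤ) : Set (ℤ → Torus) := {x | ∀ n, fsT f x n = 0}

/-- The sequence `v^Δ`. -/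
def vDelta : ℤ → ℝ := fun n => if n = 0 then 1 else 0

/-- `w⁺`. -/
def IsWplus (f : Polynomial ℤ) (w : ℤ → ℝ) : Prop :=
  Bdd w ∧ fsR f w = vDelta ∧ Tendsto w atTop (nhds 0)

/-- `w⁻`. -/
def IsWminus (f : Polynomial ℤ) (w : ℤ → ℝ) : Prop :=
  Bdd w ∧ fsR f w = vDelta ∧ Tendsto w atBot (nhds 0)

/-- `ξ̄*(v)_k = ∑_{n≥0} v_n w⁻_{k-n} + ∑_{n<0} v_n w⁺_{k-n}`. -/
def xiStar (wp wm : ℤ → ℝ) (v : ℤ → ℤ) : ℤ → ℝ :=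
  fun k => ∑' n : ℤ, (v n : ℝ) * (if 0 ≤ n then wm (k - n) else wp (k - n))

/-- `ξ*(v) = ρ(ξ̄*(v)) ∈ 𝕋^ℤ`. -/
def xiStarT (wp wm : ℤ → ℝ) (v : ℤ → ℤ) : ℤ → Torus :=
  fun k => (xiStar wp wm v k : Torus)

/-- The left shift on complex sequences indexed by `ℕ`. -/
def shiftNat : Module.End ℂ (ℕ → ℂ) where
  toFun a n := a (n + 1)
  map_add' _ _ := rfl
  map_smul' _ _ := rfl

lemma shiftNat_pow_apply (k : ℕ) (a : ℕ → ℂ) (n : ℕ) : (shiftNat ^ k) a n = a (n + k) := by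
  induction k generalizing a with
  | zero => simp
  | succ k ih =>
    rw [pow_succ, Module.End.mul_apply, ih]
    change a (n + k + 1) = _
    rw [add_assoc]

/-- Exponential decay of a sequence is inherited through a first order difference equation by any
solution that tends to zero. -/
lemma exists_geometric_bound_of_first_order (θ : ℂ) (a : ℕ → ℂ) (ha : Tendsto a atTop (𝓝 0))
    (C r : ℝ) (hC : 0 ≤ C) (hr : 0 ≤ r) (hr1 : r < 1)
    (hb : ∀ n, ‖a (n + 1) - θ * a n‖ ≤ C * r ^ n) :
    ∃ D s : ℝ, 0 ≤ D ∧ 0 ≤ s ∧ s < 1 ∧ ∀ n, ‖a n‖ ≤ D * s ^ n := by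
  rcases lt_or_ge ‖θ‖ 1 with hθ | hθ
  · obtain ⟨s, hs, hs1⟩ := exists_between (max_lt hr1 hθ)
    have hrs : r < s := (le_max_left _ _).trans_lt hs
    have hθs : ‖θ‖ < s := (le_max_right _ _).trans_lt hs
    have hs0 : 0 ≤ s := hr.trans hrs.le
    refine ⟨max ‖a 0‖ (C / (s - ‖θ‖)), s, le_max_of_le_left (norm_nonneg _), hs0, hs1, ?_⟩
    set D := max ‖a 0‖ (C / (s - ‖θ‖)) with hD
    have hCD : C ≤ D * (s - ‖θ‖) := by
      rw [← div_le_iff₀ (sub_pos.2 hθs)]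
      exact le_max_right _ _
    intro n
    induction n with
    | zero => simp [hD]
    | succ n ih =>
      have h1 : ‖a (n + 1)‖ ≤ ‖a (n + 1) - θ * a n‖ + ‖θ‖ * ‖a n‖ := by
        rw [← norm_mul]
        simpa using norm_add_le (a (n + 1) - θ * a n) (θ * a n)
      have h2 : C * r ^ n ≤ D * (s - ‖θ‖) * s ^ n := by gcongr
      have h3 : ‖θ‖ * ‖a n‖ ≤ ‖θ‖ * (D * s ^ n) := by gcongr
      calc ‖a (n + 1)‖ ≤ D * (s - ‖θ‖) * s ^ n + ‖θ‖ * (D * s ^ n) := by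
            linarith [hb n]
        _ = D * s ^ (n + 1) := by ring
  · refine ⟨C / (1 - r), r, div_nonneg hC (by linarith), hr, hr1, fun n => ?_⟩
    have hr' : 0 < 1 - r := by linarith
    have step : ∀ n, ‖a n‖ ≤ ‖a (n + 1)‖ + C * r ^ n := fun n => by
      have h1 : ‖a n‖ ≤ ‖θ‖ * ‖a n‖ := le_mul_of_one_le_left (norm_nonneg _) hθ
      have h2 : ‖θ‖ * ‖a n‖ ≤ ‖a (n + 1)‖ + ‖a (n + 1) - θ * a n‖ := by
        rw [← norm_mul]
        simpa using norm_sub_le (a (n + 1)) (a (n + 1) - θ * a n)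
      linarith [hb n]
    have many : ∀ K, ‖a n‖ ≤ ‖a (n + K)‖ + C / (1 - r) * (r ^ n - r ^ (n + K)) := fun K => by
      induction K with
      | zero => simp
      | succ K ih =>
        have h : C * r ^ (n + K) = C / (1 - r) * (r ^ (n + K) - r ^ (n + (K + 1))) := by
          field_simp
          ring
        have := step (n + K)
        rw [h] at this
        rw [← add_assoc] at *
        linarith
    have hle : ∀ K, ‖a n‖ ≤ ‖a (n + K)‖ + C / (1 - r) * r ^ n := fun K => by
      refine (many K).trans ?_
      have : 0 ≤ C / (1 - r) := div_nonneg hC hr'.le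
      gcongr
      linarith [pow_nonneg hr (n + K)]
    have hlim : Tendsto (fun K => ‖a (n + K)‖ + C / (1 - r) * r ^ n) atTop
        (𝓝 (0 + C / (1 - r) * r ^ n)) := by
      refine Tendsto.add_const _ ?_
      have h := ha.norm.comp (tendsto_add_atTop_nat n)
      simpa [Function.comp_def, add_comm] using h
    simpa using ge_of_tendsto' hlim hle

lemma exists_geometric_bound_of_prod (t : Multiset ℂ) (a : ℕ → ℂ)
    (ha : Tendsto a atTop (𝓝 0))
    (h : aeval shiftNat (t.map fun θ => X - C θ).prod a = 0) :
    ∃ D s : ℝ, 0 ≤ D ∧ 0 ≤ s ∧ s < 1 ∧ ∀ n, ‖a n‖ ≤ D * s ^ n := by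
  induction t using Multiset.induction generalizing a with
  | empty =>
    have : a = 0 := by simpa using h
    exact ⟨0, 0, le_rfl, le_rfl, one_pos, by simp [this]⟩
  | cons θ t ih =>
    let b : ℕ → ℂ := fun n => a (n + 1) - θ * a n
    have hb : aeval shiftNat (X - C θ) a = b := by
      ext n
      simp [b, shiftNat]
    rw [Multiset.map_cons, Multiset.prod_cons, mul_comm, map_mul, Module.End.mul_apply, hb] at h
    have hlim : Tendsto b atTop (𝓝 0) := by
      simpa using (ha.comp (tendsto_add_atTop_nat 1)).sub (ha.const_mul θ)
    obtain ⟨D, s, hD, hs, hs1, hbd⟩ := ih b hlim h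
    exact exists_geometric_bound_of_first_order θ a ha D s hD hs hs1 hbd

/-- A null sequence that eventually satisfies a nontrivial linear recurrence is absolutely
summable. -/
lemma summable_abs_of_recurrence (c : ℕ → ℝ) (M : ℕ) (hc : ∃ k ≤ M, c k ≠ 0) (a : ℕ → ℝ)
    (ha : Tendsto a atTop (𝓝 0)) (N : ℕ)
    (hrec : ∀ n ≥ N, ∑ k ∈ Finset.range (M + 1), c k * a (n + k) = 0) :
    Summable fun n => |a n| := by
  let p : ℂ[X] := ∑ k ∈ Finset.range (M + 1), C (c k : ℂ) * X ^ k
  have hp : p ≠ 0 := by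
    obtain ⟨k, hk, hck⟩ := hc
    intro h0
    have := congrArg (fun q => q.coeff k) h0
    simp [p, Polynomial.finsetSum_coeff, coeff_C_mul, coeff_X_pow, hck] at this
    omega
  let b : ℕ → ℂ := fun n => (a (n + N) : ℂ)
  have hb : aeval shiftNat p b = 0 := by
    ext n
    have h := hrec (n + N) (by omega)
    simp only [p, map_sum, map_mul, aeval_C, map_pow, aeval_X, LinearMap.sum_apply,
      Module.End.mul_apply, Module.algebraMap_end_apply, Finset.sum_apply, Pi.smul_apply,
      shiftNat_pow_apply, Pi.zero_apply, smul_eq_mul, b]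
    rw [← Complex.ofReal_zero, ← h]
    push_cast
    refine Finset.sum_congr rfl fun k _ => ?_
    rw [add_right_comm]
  have hsplit := (IsAlgClosed.splits p).eq_prod_roots
  rw [hsplit, map_mul, Module.End.mul_apply, aeval_C, Module.algebraMap_end_apply,
    smul_eq_zero] at hb
  have hlim : Tendsto b atTop (𝓝 0) := by
    have := (Complex.continuous_ofReal.tendsto 0).comp (ha.comp (tendsto_add_atTop_nat N))
    simpa [b, Function.comp_def] using this
  obtain ⟨D, s, -, hs, hs1, hbd⟩ := exists_geometric_bound_of_prod _ b hlim
    (hb.resolve_left (leadingCoeff_ne_zero.2 hp))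
  refine (summable_nat_add_iff N).1 (Summable.of_nonneg_of_le (fun _ => abs_nonneg _)
    (fun n => ?_) ((summable_geometric_of_lt_one hs hs1).mul_left D))
  simpa [b] using hbd n

/-- The kernel of `ξ̄*`: `w⁻` for nonnegative indices and `w⁺` for negative ones. -/
def xiKernel (wp wm : ℤ → ℝ) (n i : ℤ) : ℝ := if 0 ≤ n then wm i else wp i

lemma summable_wplus {f : Polynomial ℤ} (h0 : f.coeff 0 ≠ 0) {wp : ℤ → ℝ}
    (hwp : IsWplus f wp) (k : ℤ) : Summable fun n : ℕ => |wp (k + n)| := by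
  obtain ⟨-, heq, hlim⟩ := hwp
  refine summable_abs_of_recurrence (fun j => f.coeff j) f.natDegree
    ⟨0, Nat.zero_le _, by exact_mod_cast h0⟩ (fun n : ℕ => wp (k + n)) ?_ (k.natAbs + 1) ?_
  · exact hlim.comp (tendsto_atTop_add_const_left _ k tendsto_natCast_atTop_atTop)
  · intro n hn
    have h := congrFun heq (k + n)
    rw [vDelta, if_neg (by omega)] at h
    simpa [fsR, add_assoc] using h

lemma summable_wminus {f : Polynomial ℤ} (hlead : 0 < f.leadingCoeff) {wm : ℤ → ℝ}
    (hwm : IsWminus f wm) (k : ℤ) : Summable fun n : ℕ => |wm (k - n)| := by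
  obtain ⟨-, heq, hlim⟩ := hwm
  refine summable_abs_of_recurrence (fun j => f.coeff (f.natDegree - j)) f.natDegree
    ⟨0, Nat.zero_le _, ?_⟩ (fun n : ℕ => wm (k - n)) ?_ (k.natAbs + 1) ?_
  · simpa using hlead.ne'
  · refine hlim.comp ?_
    simp only [sub_eq_add_neg]
    exact tendsto_atBot_add_const_left _ k
      (tendsto_neg_atTop_atBot.comp tendsto_natCast_atTop_atTop)
  · intro n hn
    have h := congrFun heq (k - n - f.natDegree)
    rw [vDelta, if_neg (by omega), fsR, ← Finset.sum_range_reflect] at h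
    rw [← h]
    refine Finset.sum_congr rfl fun j hj => ?_
    have hj' : j ≤ f.natDegree := by simpa [Nat.lt_succ_iff] using hj
    have h1 : f.natDegree + 1 - 1 - j = f.natDegree - j := by omega
    rw [h1]
    congr 2
    push_cast [hj']
    ring

section Kernel

variable {f : Polynomial ℤ} {wp wm : ℤ → ℝ}

lemma summable_mul_xiKernel (hlead : 0 < f.leadingCoeff) (h0 : f.coeff 0 ≠ 0)
    (hwp : IsWplus f wp) (hwm : IsWminus f wm) {v : ℤ → ℝ} (hv : Bdd v) (k : ℤ) :
    Summable fun n : ℤ => v n * xiKernel wp wm n (k - n) := by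
  obtain ⟨B, hB⟩ := hv
  refine Summable.of_nat_of_neg_add_one ?_ ?_
  · refine Summable.of_norm_bounded ((summable_wminus hlead hwm k).mul_left B) fun n => ?_
    rw [xiKernel, if_pos (by omega), norm_mul]
    exact mul_le_mul_of_nonneg_right (hB _) (abs_nonneg _)
  · refine Summable.of_norm_bounded ((summable_wplus h0 hwp (k + 1)).mul_left B) fun n => ?_
    rw [xiKernel, if_neg (by omega), norm_mul, Real.norm_eq_abs, Real.norm_eq_abs,
      show k - -((n : ℤ) + 1) = k + 1 + n by ring]
    exact mul_le_mul_of_nonneg_right (hB _) (abs_nonneg _)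

lemma sum_coeff_mul_xiKernel (hwp : IsWplus f wp) (hwm : IsWminus f wm) (n i : ℤ) :
    ∑ j ∈ Finset.range (f.natDegree + 1), (f.coeff j : ℝ) * xiKernel wp wm n (i + j)
      = vDelta i := by
  unfold xiKernel
  split_ifs
  · exact congrFun hwm.2.1 i
  · exact congrFun hwp.2.1 i

lemma tsum_mul_vDelta (v : ℤ → ℝ) (k : ℤ) : ∑' n : ℤ, v n * vDelta (k - n) = v k := by
  rw [tsum_eq_single k fun n hn => ?_]
  · simp [vDelta]
  · rw [vDelta, if_neg (by omega), mul_zero]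

/-- `f(σ̄) ∘ ξ̄*` is the identity on bounded sequences. -/
lemma fsR_tsum_xiKernel (hlead : 0 < f.leadingCoeff) (h0 : f.coeff 0 ≠ 0)
    (hwp : IsWplus f wp) (hwm : IsWminus f wm) {v : ℤ → ℝ} (hv : Bdd v) :
    fsR f (fun k => ∑' n : ℤ, v n * xiKernel wp wm n (k - n)) = v := by
  ext k
  have hs := summable_mul_xiKernel hlead h0 hwp hwm hv
  simp only [fsR, ← tsum_mul_left]
  rw [← Summable.tsum_finsetSum fun (j : ℕ) _ => (hs (k + j)).mul_left (f.coeff j : ℝ)]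
  rw [← tsum_mul_vDelta v k]
  refine tsum_congr fun n => ?_
  rw [← sum_coeff_mul_xiKernel hwp hwm n, Finset.mul_sum]
  refine Finset.sum_congr rfl fun j _ => ?_
  rw [show k + (j : ℤ) - n = k - n + j by ring]
  ring

lemma Bdd.fsR {y : ℤ → ℝ} (hy : Bdd y) : Bdd (fsR f y) := by
  obtain ⟨B, hB⟩ := hy
  refine ⟨∑ k ∈ Finset.range (f.natDegree + 1), |(f.coeff k : ℝ)| * B, fun n => ?_⟩
  refine (Finset.abs_sum_le_sum_abs _ _).trans (Finset.sum_le_sum fun k _ => ?_)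
  rw [abs_mul]
  gcongr
  exact hB _

/-- `ξ̄* ∘ f(σ̄)` differs from the identity by a bounded error on the unit ball. -/
lemma abs_sub_tsum_xiKernel_le (hlead : 0 < f.leadingCoeff) (h0 : f.coeff 0 ≠ 0)
    (hwp : IsWplus f wp) (hwm : IsWminus f wm) {A : ℝ} (hA : ∀ i, |wp i| + |wm i| ≤ A)
    {y : ℤ → ℝ} (hy : ∀ n, |y n| ≤ 1) (k : ℤ) :
    |y k - ∑' n : ℤ, fsR f y n * xiKernel wp wm n (k - n)| ≤
      ∑ _m ∈ Finset.range (f.natDegree + 1),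
        ∑ j ∈ Finset.range (f.natDegree + 1), |(f.coeff j : ℝ)| * A := by
  have hshift : ∀ (j k : ℤ), Summable fun n : ℤ => y (n + j) * xiKernel wp wm n (k - n) :=
    fun j k => summable_mul_xiKernel hlead h0 hwp hwm (v := fun n => y (n + j))
      ⟨1, fun n => hy _⟩ k
  have hsm : ∀ j : ℕ, Summable fun m : ℤ =>
      (f.coeff j : ℝ) * (y m * xiKernel wp wm (m - j) (k - m + j)) := fun j => by
    refine Summable.mul_left _ ((Equiv.addRight (j : ℤ)).summable_iff.1 ?_)
    refine (hshift j k).congr fun n => ?_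
    simp [show k - (n + (j : ℤ)) + j = k - n by ring]
  have hsm' : ∀ j : ℕ, Summable fun m : ℤ =>
      (f.coeff j : ℝ) * (y m * xiKernel wp wm m (k - m + j)) := fun j => by
    refine Summable.mul_left _ ((hshift 0 (k + j)).congr fun n => ?_)
    rw [add_zero, show k + (j : ℤ) - n = k - n + j by ring]
  have h1 : ∑' n : ℤ, fsR f y n * xiKernel wp wm n (k - n) =
      ∑' m : ℤ, ∑ j ∈ Finset.range (f.natDegree + 1),
        (f.coeff j : ℝ) * (y m * xiKernel wp wm (m - j) (k - m + j)) := by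
    rw [Summable.tsum_finsetSum fun j _ => hsm j]
    simp only [fsR, Finset.sum_mul, mul_assoc]
    rw [Summable.tsum_finsetSum fun (j : ℕ) _ => (hshift j k).mul_left (f.coeff j : ℝ)]
    refine Finset.sum_congr rfl fun j _ => ?_
    conv_rhs => rw [← (Equiv.addRight (j : ℤ)).tsum_eq]
    refine tsum_congr fun n => ?_
    simp [show k - (n + (j : ℤ)) + j = k - n by ring]
  have h2 : y k = ∑' m : ℤ, ∑ j ∈ Finset.range (f.natDegree + 1),
        (f.coeff j : ℝ) * (y m * xiKernel wp wm m (k - m + j)) := by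
    rw [← tsum_mul_vDelta y k]
    refine tsum_congr fun n => ?_
    rw [← sum_coeff_mul_xiKernel hwp hwm n, Finset.mul_sum]
    exact Finset.sum_congr rfl fun j _ => by ring
  have h3 : y k - ∑' n : ℤ, fsR f y n * xiKernel wp wm n (k - n) =
      ∑' m : ℤ, ∑ j ∈ Finset.range (f.natDegree + 1), (f.coeff j : ℝ) *
        (y m * (xiKernel wp wm m (k - m + j) - xiKernel wp wm (m - j) (k - m + j))) := by
    rw [h1, h2, ← Summable.tsum_sub (summable_sum fun j _ => hsm' j)
      (summable_sum fun j _ => hsm j)]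
    refine tsum_congr fun m => ?_
    rw [← Finset.sum_sub_distrib]
    exact Finset.sum_congr rfl fun j _ => by ring
  rw [h3, tsum_eq_sum (s := (Finset.range (f.natDegree + 1)).map Nat.castEmbedding)
    fun m hm => ?_, Finset.sum_map]
  · refine (Finset.abs_sum_le_sum_abs _ _).trans (Finset.sum_le_sum fun m _ => ?_)
    refine (Finset.abs_sum_le_sum_abs _ _).trans (Finset.sum_le_sum fun j _ => ?_)
    rw [abs_mul, abs_mul]
    refine mul_le_mul_of_nonneg_left ?_ (abs_nonneg _)
    refine (mul_le_of_le_one_left (abs_nonneg _) (hy _)).trans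
      (le_trans ?_ (hA (k - Nat.castEmbedding m + j)))
    unfold xiKernel
    split_ifs
    · simp only [sub_self, abs_zero]
      positivity
    · exact (norm_sub_le (E := ℝ) _ _).trans_eq (add_comm _ _)
    · exact norm_sub_le (E := ℝ) _ _
    · simp only [sub_self, abs_zero]
      positivity
  · refine Finset.sum_eq_zero fun j hj => ?_
    have hj' : j ≤ f.natDegree := by simpa [Nat.lt_succ_iff] using hj
    have hm' : m < 0 ∨ (f.natDegree : ℤ) < m := by
      by_contra! hcon
      refine hm (Finset.mem_map.2 ⟨m.toNat, ?_, ?_⟩)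
      · rw [Finset.mem_range]; omega
      · simp [hcon.1]
    have : xiKernel wp wm m (k - m + j) = xiKernel wp wm (m - j) (k - m + j) := by
      unfold xiKernel
      rcases hm' with h | h
      · rw [if_neg (by omega), if_neg (by omega)]
      · rw [if_pos (by omega), if_pos (by omega)]
    rw [this, sub_self, mul_zero, mul_zero]

end Kernel

lemma fsT_coe (f : Polynomial ℤ) (w : ℤ → ℝ) (n : ℤ) :
    fsT f (fun k => (w k : Torus)) n = (fsR f w n : Torus) := by
  have h := map_sum (QuotientAddGroup.mk' (AddSubgroup.zmultiples (1 : ℝ)))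
    (fun k : ℕ => (f.coeff k : ℝ) * w (n + k)) (Finset.range (f.natDegree + 1))
  refine Eq.trans (Finset.sum_congr rfl fun k _ => ?_) h.symm
  rw [← AddCircle.coe_zsmul, zsmul_eq_mul]
  rfl

lemma torus_coe_eq_zero_iff (t : ℝ) : (t : Torus) = 0 ↔ ∃ z : ℤ, t = z := by
  rw [AddCircle.coe_eq_zero_iff]
  simp [eq_comm]

lemma fsR_add (f : Polynomial ℤ) (w w' : ℤ → ℝ) (n : ℤ) :
    fsR f (fun k => w k + w' k) n = fsR f w n + fsR f w' n := by
  simp only [fsR, mul_add, Finset.sum_add_distrib]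

lemma fsR_sub (f : Polynomial ℤ) (w w' : ℤ → ℝ) (n : ℤ) :
    fsR f (fun k => w k - w' k) n = fsR f w n - fsR f w' n := by
  simp only [fsR, mul_sub, Finset.sum_sub_distrib]

lemma bdd_of_mem_closure_YfSet {f : Polynomial ℤ} {y : ℤ → ℝ} (hy : y ∈ closure (YfSet f)) :
    Bdd y := by
  have hc : IsClosed (Set.univ.pi fun _ : ℤ => Set.Icc (0 : ℝ) 1) :=
    isClosed_set_pi fun _ _ => isClosed_Icc
  have hsub : YfSet f ⊆ Set.univ.pi fun _ : ℤ => Set.Icc (0 : ℝ) 1 :=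
    fun w hw n _ => Set.Ico_subset_Icc_self (hw.2 n)
  refine ⟨1, fun n => ?_⟩
  have := closure_minimal hsub hc hy n (Set.mem_univ n)
  rw [abs_of_nonneg this.1]
  exact this.2


/-- there is `r > 0` with `ξ*(Z̄_f) + ρ(B̄_r(W_f^∘)) = X_f`; in particular
`ξ*(Z̄_f) + X_f^∘ = X_f`. -/
theorem xiStar_Zbar_cover (f : Polynomial ℤ) (hm : 1 ≤ f.natDegree)
    (hlead : 0 < f.leadingCoeff) (h0 : f.coeff 0 ≠ 0)
    (hirr : Irreducible (Polynomial.toLaurent f)) (hnc : Noncyclotomic f)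
    (wp wm : ℤ → ℝ) (hwp : IsWplus f wp) (hwm : IsWminus f wm) :
    ∃ r > (0:ℝ),
      {x : ℤ → Torus | ∃ v : ℤ → ℤ, (fun n => (v n : ℝ)) ∈ ZbarR f ∧
        ∃ w : ℤ → ℝ, (∀ n, fsR f w n = 0) ∧ (∀ n, |w n| ≤ r) ∧
          x = fun k => xiStarT wp wm v k + ((w k : ℝ) : Torus)} = Xf f ∧
      {x : ℤ → Torus | ∃ v : ℤ → ℤ, (fun n => (v n : ℝ)) ∈ ZbarR f ∧
        ∃ w : ℤ → ℝ, (∀ n, fsR f w n = 0) ∧ Bdd w ∧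
          x = fun k => xiStarT wp wm v k + ((w k : ℝ) : Torus)} = Xf f := by
  obtain ⟨Bp, hBp⟩ := hwp.1
  obtain ⟨Bm, hBm⟩ := hwm.1
  set R := ∑ _m ∈ Finset.range (f.natDegree + 1),
    ∑ j ∈ Finset.range (f.natDegree + 1), |(f.coeff j : ℝ)| * (Bp + Bm) with hR
  have hsub : ∀ v : ℤ → ℤ, (fun n => (v n : ℝ)) ∈ ZbarR f → ∀ w : ℤ → ℝ,
      (∀ n, fsR f w n = 0) →
      (fun k => xiStarT wp wm v k + ((w k : ℝ) : Torus)) ∈ Xf f := by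
    rintro v ⟨y, hy, hyv⟩ w hw n
    have hv : Bdd fun n => (v n : ℝ) := hyv ▸ (bdd_of_mem_closure_YfSet hy).fsR
    have hxi : fsR f (xiStar wp wm v) = fun n => (v n : ℝ) :=
      fsR_tsum_xiKernel hlead h0 hwp hwm hv
    have h : (fun k => xiStarT wp wm v k + ((w k : ℝ) : Torus)) =
        fun k => ((xiStar wp wm v k + w k : ℝ) : Torus) := rfl
    rw [h, fsT_coe, fsR_add, hxi, hw, torus_coe_eq_zero_iff]
    exact ⟨v n, add_zero _⟩
  have hsup : ∀ x ∈ Xf f, ∃ v : ℤ → ℤ, (fun n => (v n : ℝ)) ∈ ZbarR f ∧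
      ∃ w : ℤ → ℝ, (∀ n, fsR f w n = 0) ∧ (∀ n, |w n| ≤ R) ∧
        x = fun k => xiStarT wp wm v k + ((w k : ℝ) : Torus) := by
    intro x hx
    have hlift : ∀ n, ∃ t : ℝ, t ∈ Set.Ico (0 : ℝ) 1 ∧ (t : Torus) = x n := fun n => by
      obtain ⟨s, hs⟩ := QuotientAddGroup.mk_surjective (x n)
      refine ⟨Int.fract s, ⟨Int.fract_nonneg s, Int.fract_lt_one s⟩, ?_⟩
      rw [← hs, ← sub_eq_zero]
      refine ((torus_coe_eq_zero_iff (Int.fract s - s)).2 ⟨-⌊s⌋, ?_⟩)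
      rw [Int.fract]
      push_cast
      ring
    choose y hy hyx using hlift
    obtain rfl : (fun k => (y k : Torus)) = x := funext hyx
    have hy1 : ∀ n, |y n| ≤ 1 := fun n => by
      rw [abs_of_nonneg (hy n).1]
      exact (hy n).2.le
    have hint : ∀ n, ∃ z : ℤ, fsR f y n = z := fun n => by
      rw [← torus_coe_eq_zero_iff, ← fsT_coe]
      exact hx n
    choose v hv using hint
    have hv' : (fun n => (v n : ℝ)) = fsR f y := funext fun n => (hv n).symm
    have hvb : Bdd fun n => (v n : ℝ) := hv' ▸ Bdd.fsR ⟨1, hy1⟩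
    have hxi : fsR f (xiStar wp wm v) = fun n => (v n : ℝ) :=
      fsR_tsum_xiKernel hlead h0 hwp hwm hvb
    refine ⟨v, hv' ▸ Set.mem_image_of_mem _ (subset_closure
      ⟨⟨⟨1, hy1⟩, fun n => ⟨v n, hv n⟩⟩, hy⟩), fun k => y k - xiStar wp wm v k,
      fun n => ?_, fun k => ?_, ?_⟩
    · rw [fsR_sub, hxi, hv, sub_self]
    · have h := abs_sub_tsum_xiKernel_le hlead h0 hwp hwm
        (fun i => add_le_add (hBp i) (hBm i)) hy1 k
      rw [← hv'] at h
      exact h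
    · funext k
      change (y k : Torus) = ((xiStar wp wm v k + (y k - xiStar wp wm v k) : ℝ) : Torus)
      rw [add_sub_cancel]
  refine ⟨max R 1, lt_max_of_lt_right one_pos, Set.Subset.antisymm ?_ ?_,
    Set.Subset.antisymm ?_ ?_⟩
  · rintro _ ⟨v, hv, w, hw, -, rfl⟩
    exact hsub v hv w hw
  · intro x hx
    obtain ⟨v, hv, w, hw, hwR, hxw⟩ := hsup x hx
    exact ⟨v, hv, w, hw, fun n => (hwR n).trans (le_max_left _ _), hxw⟩
  · rintro _ ⟨v, hv, w, hw, -, rfl⟩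
    exact hsub v hv w hw
  · intro x hx
    obtain ⟨v, hv, w, hw, hwR, hxw⟩ := hsup x hx
    exact ⟨v, hv, w, hw, ⟨R, hwR⟩, hxw⟩

end
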